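/- Asymptotic Equipartition Property for single probability spaces via the Kolmogorov distance: for every finite probability space X there exists a sequence (H_n) of uniform (homogeneous) finite probability spaces such that (1/n)·k(X^{⊗n}, H_n) = O(√(ln³n / n)) as n → ∞; consequently ḱ(X, Y) = |Ent(X) − Ent(Y)| for any finite probability spaces X and Y. -/

import Mathlib

open scoped Classical BigOperators
open Finset

noncomputable section

/-- A probability distribution on a finite set. -/
def IsDist {S : Type*} [Fintype S] (p : S → ℝ) : Prop :=
  (∀ x, 0 ≤ p x) ∧ ∑ x, p x = 1

/-- Shannon entropy (natural logarithm). -/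
def ent {S : Type*} [Fintype S] (p : S → ℝ) : ℝ :=
  -∑ x, p x * Real.log (p x)

/-- Relative entropy (Kullback–Leibler divergence). -/
def KL {S : Type*} [Fintype S] (p q : S → ℝ) : ℝ :=
  ∑ x, p x * Real.log (p x / q x)

/-- The n-fold product (Bernoulli) distribution. -/
def powDist {S : Type*} [Fintype S] (p : S → ℝ) (n : ℕ) : (Fin n → S) → ℝ :=
  fun f => ∏ i, p (f i)

/-- Tensor product of two distributions. -/
def prodDist {S T : Type*} [Fintype S] [Fintype T] (p : S → ℝ) (q : T → ℝ) :
    S × T → ℝ :=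
  fun z => p z.1 * q z.2

/-- Empirical distribution of a sequence. -/
def emp {S : Type*} [Fintype S] {n : ℕ} (f : Fin n → S) : S → ℝ :=
  fun a => ((univ.filter (fun i => f i = a)).card : ℝ) / n

/-- A coupling (joint distribution with given marginals). -/
def IsCoupling {S T : Type*} [Fintype S] [Fintype T]
    (w : S × T → ℝ) (p : S → ℝ) (q : T → ℝ) : Prop :=
  IsDist w ∧ (∀ x, ∑ y, w (x, y) = p x) ∧ (∀ y, ∑ x, w (x, y) = q y)

/-- The intrinsic Kolmogorov–Sinai distance. -/
def kdist {S T : Type*} [Fintype S] [Fintype T] (p : S → ℝ) (q : T → ℝ) : ℝ :=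
  sInf {d : ℝ | ∃ w : S × T → ℝ, IsCoupling w p q ∧ d = 2 * ent w - ent p - ent q}

end

namespace AEP

/-- Overlap of the half line up to `t` with the unit interval starting at `y`. -/
noncomputable def ov (y : ℕ) (t : ℝ) : ℝ := min (max (t - y) 0) 1

lemma ov_mono (y : ℕ) {s t : ℝ} (h : s ≤ t) : ov y s ≤ ov y t := by
  unfold ov
  gcongr

lemma ov_zero (y : ℕ) : ov y 0 = 0 := by
  unfold ov
  have : (0 : ℝ) - y ≤ 0 := by simp
  rw [max_eq_right this]; simp

lemma ov_one (y m : ℕ) (h : y < m) : ov y m = 1 := by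
  unfold ov
  have : (y : ℝ) + 1 ≤ m := by exact_mod_cast h
  rw [min_eq_right]
  exact le_max_of_le_left (by linarith)

lemma sum_ov (m : ℕ) (t : ℝ) (h0 : 0 ≤ t) : ∑ y ∈ range m, ov y t = min t m := by
  induction m with
  | zero => simp [h0]
  | succ m ih =>
    rw [sum_range_succ, ih]
    unfold ov
    push_cast
    rcases le_total t m with h | h
    · rw [min_eq_left h, max_eq_right (by linarith), min_eq_left (by norm_num),
        min_eq_left (by linarith)]
      simp
    · rw [min_eq_right h, max_eq_left (by linarith)]
      rcases le_total t (m + 1) with h' | h'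
      · rw [min_eq_left (by linarith), min_eq_left h']; ring
      · rw [min_eq_right (by linarith), min_eq_right h']

lemma ov_support (y : ℕ) {a b : ℝ} (hab : a ≤ b) (h : ov y b - ov y a ≠ 0) :
    a < y + 1 ∧ (y : ℝ) < b := by
  constructor
  · by_contra hc
    push Not at hc
    apply h
    unfold ov
    rw [min_eq_right (le_max_of_le_left (by linarith)),
      min_eq_right (le_max_of_le_left (by linarith))]
    simp
  · by_contra hc
    push Not at hc
    apply h
    unfold ov
    rw [max_eq_right (by linarith), max_eq_right (by linarith)]
    simp

lemma card_supp (m : ℕ) {a b : ℝ} (ha : 0 ≤ a) (hab : a ≤ b) :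
    ((univ.filter (fun y : Fin m => ov y b - ov y a ≠ 0)).card : ℝ) ≤ (b - a) + 2 := by
  have h1 : (univ.filter (fun y : Fin m => ov y b - ov y a ≠ 0)).card ≤
      (Finset.Ico ⌊a⌋₊ ⌈b⌉₊).card := by
    apply Finset.card_le_card_of_injOn (fun y : Fin m => (y : ℕ))
    · intro y hy
      simp only [coe_filter, mem_univ, true_and, Set.mem_ofPred_eq] at hy
      obtain ⟨h1, h2⟩ := ov_support y hab hy
      simp only [coe_Ico, Set.mem_Ico]
      refine ⟨?_, ?_⟩
      · apply Nat.lt_succ_iff.mp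
        rw [Nat.floor_lt ha]
        push_cast
        exact h1
      · exact Nat.lt_ceil.mpr h2
    · intro x _ y _ h
      exact Fin.ext h
  rw [Nat.card_Ico] at h1
  have h2 : ((⌈b⌉₊ - ⌊a⌋₊ : ℕ) : ℝ) ≤ b - a + 2 := by
    have hb := (Nat.ceil_lt_add_one (ha.trans hab)).le
    have hf := (Nat.lt_floor_add_one a).le
    rcases le_total ⌊a⌋₊ ⌈b⌉₊ with h | h
    · rw [Nat.cast_sub h]; linarith
    · rw [Nat.sub_eq_zero_of_le h]; push_cast; linarith
  calc _ ≤ ((⌈b⌉₊ - ⌊a⌋₊ : ℕ) : ℝ) := by exact_mod_cast h1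
    _ ≤ _ := h2

lemma exists_coupling {S : Type*} [Fintype S] (p : S → ℝ) (hp : IsDist p) (m : ℕ) (hm : 0 < m) :
    ∃ w : S × Fin m → ℝ, IsCoupling w p (fun _ : Fin m => (1 : ℝ) / m) ∧
      ∀ x, ((univ.filter (fun y : Fin m => w (x, y) ≠ 0)).card : ℝ) ≤ p x * m + 2 := by
  obtain ⟨hp0, hp1⟩ := hp
  set k := Fintype.card S
  let e : S ≃ Fin k := Fintype.equivFin S
  let P : ℕ → ℝ := fun j => if h : j < k then p (e.symm ⟨j, h⟩) else 0
  have hPe : ∀ x, P (e x) = p x := by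
    intro x
    simp [P]
  have hP0 : ∀ j, 0 ≤ P j := by
    intro j
    simp only [P]
    split_ifs
    · exact hp0 _
    · exact le_rfl
  let F : ℕ → ℝ := fun i => m * ∑ j ∈ range i, P j
  have hsumS : ∀ G : ℕ → ℝ, ∑ x : S, G (e x) = ∑ i ∈ range k, G i := by
    intro G
    rw [Equiv.sum_comp e (fun i : Fin k => G i), Fin.sum_univ_eq_sum_range]
  have hPsum : ∑ j ∈ range k, P j = 1 := by
    rw [← hsumS, ← hp1]
    exact sum_congr rfl (fun x _ => hPe x)
  have hF0 : F 0 = 0 := by simp [F]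
  have hFk : F k = m := by simp [F, hPsum]
  have hm0 : (0 : ℝ) < m := by exact_mod_cast hm
  have hFs : ∀ i, F (i + 1) - F i = P i * m := by
    intro i
    simp only [F, sum_range_succ]; ring
  have hFle : ∀ i, F i ≤ F (i + 1) := by
    intro i
    have := hFs i
    have := mul_nonneg (hP0 i) hm0.le
    linarith
  have hFmono : Monotone F := monotone_nat_of_le_succ hFle
  have hFnn : ∀ i, 0 ≤ F i := fun i => hF0 ▸ hFmono (Nat.zero_le i)
  have hsx : ∀ x, ∑ y : Fin m, (ov y (F (e x + 1)) - ov y (F (e x))) / m = p x := by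
    intro x
    rw [← sum_div, sum_sub_distrib, Fin.sum_univ_eq_sum_range (fun y => ov y (F (e x + 1))),
      Fin.sum_univ_eq_sum_range (fun y => ov y (F (e x))), sum_ov _ _ (hFnn _),
      sum_ov _ _ (hFnn _)]
    have h1 : F (e x + 1) ≤ m := hFk ▸ hFmono (e x).2
    have h2 : F (e x) ≤ m := hFk ▸ hFmono (e x).2.le
    rw [min_eq_left h1, min_eq_left h2, hFs, hPe]
    field_simp
  refine ⟨fun z => (ov z.2 (F (e z.1 + 1)) - ov z.2 (F (e z.1))) / m, ⟨⟨?_, ?_⟩, ?_, ?_⟩, ?_⟩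
  · intro z
    have := ov_mono z.2 (hFle (e z.1))
    exact div_nonneg (by linarith) hm0.le
  · rw [Fintype.sum_prod_type]
    rw [← hp1]
    exact sum_congr rfl (fun x _ => hsx x)
  · exact hsx
  · intro y
    rw [← sum_div]
    congr 1
    simp only
    rw [hsumS (fun i => ov y (F (i + 1)) - ov y (F i)),
      Finset.sum_range_sub (fun i => ov y (F i)), hF0, hFk, ov_zero, ov_one _ _ y.2]
    simp
  · intro x
    have := card_supp m (hFnn (e x)) (hFle (e x))
    rw [hFs, hPe] at this
    refine le_trans (le_of_eq ?_) this
    congr 2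
    ext y
    simp [hm.ne']

lemma fiber_ent_le {T : Type*} [Fintype T] (w : T → ℝ) (hw : ∀ y, 0 ≤ w y) (N : ℝ) (hN : 0 < N)
    (hc : ((univ.filter (fun y => w y ≠ 0)).card : ℝ) ≤ N) :
    -∑ y, w y * Real.log (w y) ≤ -((∑ y, w y) * Real.log (∑ y, w y)) +
      (∑ y, w y) * Real.log N := by
  set p := ∑ y, w y with hp
  have hp0 : 0 ≤ p := sum_nonneg (fun y _ => hw y)
  have hle : ∀ y, w y ≤ p := fun y => single_le_sum (fun y _ => hw y) (mem_univ y)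
  have key : ∀ y, w y * (Real.log p - Real.log N - Real.log (w y)) ≤
      (if w y ≠ 0 then p / N else 0) - w y := by
    intro y
    by_cases h : w y = 0
    · simp [h]
    · have hpos : 0 < w y := lt_of_le_of_ne (hw y) (Ne.symm h)
      have hpp : 0 < p := hpos.trans_le (hle y)
      simp only [ne_eq, h, not_false_eq_true, if_true]
      have := Real.log_le_sub_one_of_pos (x := p / N / w y) (by positivity)
      rw [Real.log_div (by positivity) h, Real.log_div hpp.ne' hN.ne'] at this
      calc _ ≤ w y * (p / N / w y - 1) := by gcongr
        _ = _ := by field_simp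
  have hs := sum_le_sum (fun y (_ : y ∈ univ) => key y)
  rw [sum_sub_distrib, ← sum_filter, sum_const, nsmul_eq_mul, ← hp] at hs
  have h1 : ((univ.filter (fun y => w y ≠ 0)).card : ℝ) * (p / N) ≤ p := by
    calc _ ≤ N * (p / N) := by gcongr
      _ = p := by field_simp
  have h2 : ∑ y, w y * (Real.log p - Real.log N - Real.log (w y)) =
      p * (Real.log p - Real.log N) - ∑ y, w y * Real.log (w y) := by
    rw [hp, sum_mul, ← sum_sub_distrib]
    exact sum_congr rfl (fun y _ => by ring)
  rw [h2] at hs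
  linarith

lemma fiber_ent_ge {T : Type*} [Fintype T] (w : T → ℝ) (hw : ∀ y, 0 ≤ w y) :
    -((∑ y, w y) * Real.log (∑ y, w y)) ≤ -∑ y, w y * Real.log (w y) := by
  rw [neg_le_neg_iff, sum_mul]
  apply sum_le_sum
  intro y _
  rcases (hw y).eq_or_lt with h | h
  · simp [← h]
  · have := Real.log_le_log h (single_le_sum (fun y _ => hw y) (mem_univ y))
    gcongr

lemma ent_prod {S T : Type*} [Fintype S] [Fintype T] (w : S × T → ℝ) :
    ent w = ∑ x, -∑ y, w (x, y) * Real.log (w (x, y)) := by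
  unfold ent
  rw [Fintype.sum_prod_type, sum_neg_distrib]

lemma ent_ge_left {S T : Type*} [Fintype S] [Fintype T] (w : S × T → ℝ) (hw : ∀ z, 0 ≤ w z)
    (p : S → ℝ) (h : ∀ x, ∑ y, w (x, y) = p x) : ent p ≤ ent w := by
  rw [ent_prod]
  unfold ent
  rw [← sum_neg_distrib]
  apply sum_le_sum
  intro x _
  have := fiber_ent_ge (fun y => w (x, y)) (fun y => hw _)
  simpa only [h] using this

lemma ent_ge_right {S T : Type*} [Fintype S] [Fintype T] (w : S × T → ℝ) (hw : ∀ z, 0 ≤ w z)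
    (q : T → ℝ) (h : ∀ y, ∑ x, w (x, y) = q y) : ent q ≤ ent w := by
  have h1 := ent_ge_left (fun z : T × S => w (z.2, z.1)) (fun z => hw _) q h
  refine h1.trans (le_of_eq ?_)
  unfold ent
  congr 1
  exact Equiv.sum_comp (Equiv.prodComm T S) (fun z => w z * Real.log (w z))

lemma ent_unif (m : ℕ) (hm : 0 < m) : ent (fun _ : Fin m => (1 : ℝ) / m) = Real.log m := by
  have : (m : ℝ) ≠ 0 := by exact_mod_cast hm.ne'
  unfold ent
  simp
  field_simp

lemma kdist_bdd {S T : Type*} [Fintype S] [Fintype T] (p : S → ℝ) (q : T → ℝ) :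
    |ent p - ent q| ∈ lowerBounds {d : ℝ | ∃ w : S × T → ℝ, IsCoupling w p q ∧
      d = 2 * ent w - ent p - ent q} := by
  rintro d ⟨w, ⟨⟨h0, _⟩, h1, h2⟩, rfl⟩
  have a := ent_ge_left w h0 p h1
  have b := ent_ge_right w h0 q h2
  rw [abs_le]
  constructor <;> linarith

lemma kdist_le {S T : Type*} [Fintype S] [Fintype T] (p : S → ℝ) (q : T → ℝ) (w : S × T → ℝ)
    (hw : IsCoupling w p q) : kdist p q ≤ 2 * ent w - ent p - ent q :=
  csInf_le ⟨_, kdist_bdd p q⟩ ⟨w, hw, rfl⟩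

lemma le_kdist {S T : Type*} [Fintype S] [Fintype T] (p : S → ℝ) (q : T → ℝ)
    (hp : IsDist p) (hq : IsDist q) : |ent p - ent q| ≤ kdist p q := by
  apply le_csInf _ (kdist_bdd p q)
  have h1 : ∀ x, ∑ y, p x * q y = p x := fun x => by rw [← mul_sum, hq.2, mul_one]
  refine ⟨_, fun z => p z.1 * q z.2, ⟨⟨fun z => mul_nonneg (hp.1 _) (hq.1 _), ?_⟩, h1, ?_⟩, rfl⟩
  · rw [Fintype.sum_prod_type]
    simp only [h1, hp.2]
  · intro y
    simp only
    rw [← sum_mul, hp.2, one_mul]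

/-- Varentropy. -/
noncomputable def vare {S : Type*} [Fintype S] (p : S → ℝ) : ℝ :=
  ∑ x, p x * (Real.log (p x) + ent p) ^ 2

lemma exists_good {S : Type*} [Fintype S] (p : S → ℝ) (hp : IsDist p) (m : ℕ) (hm : 0 < m)
    (s : ℝ) (hs : 0 < s) :
    ∃ w : S × Fin m → ℝ, IsCoupling w p (fun _ : Fin m => (1 : ℝ) / m) ∧
      2 * ent w - ent p - Real.log m ≤
        |Real.log m - ent p| + 2 * Real.log 3 + vare p / s + s := by
  obtain ⟨w, hw, hc⟩ := exists_coupling p hp m hm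
  refine ⟨w, hw, ?_⟩
  have hm0 : (0 : ℝ) < m := by exact_mod_cast hm
  set H := ent p with hH
  set L := Real.log m with hL
  set M := max (L - H) 0 with hM
  have hM0 : 0 ≤ M := le_max_right _ _
  have hM1 : L - H ≤ M := le_max_left _ _
  have hlog3 : 0 ≤ Real.log 3 := Real.log_nonneg (by norm_num)
  have h1 : ∀ x, -∑ y, w (x, y) * Real.log (w (x, y)) ≤ -(p x * Real.log (p x)) +
      p x * (Real.log 3 + M) + (p x * (Real.log (p x) + H) ^ 2) / (2 * s) + p x * (s / 2) := by
    intro x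
    have hN : 0 < p x * m + 2 := by have := mul_nonneg (hp.1 x) hm0.le; linarith
    have h := fiber_ent_le (fun y => w (x, y)) (fun y => hw.1.1 _) _ hN (hc x)
    simp only [hw.2.1] at h
    refine h.trans ?_
    rcases (hp.1 x).eq_or_lt with h0 | h0
    · simp [← h0]
    have hg : Real.log (p x * m + 2) ≤ Real.log 3 + M + (Real.log (p x) + H) ^ 2 / (2 * s) +
        s / 2 := by
      have hab : |Real.log (p x) + H| ≤ (Real.log (p x) + H) ^ 2 / (2 * s) + s / 2 := by
        rw [← sq_abs]
        have : 0 ≤ (|Real.log (p x) + H| - s) ^ 2 / (2 * s) := by positivity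
        have e : (|Real.log (p x) + H| - s) ^ 2 / (2 * s) =
          |Real.log (p x) + H| ^ 2 / (2 * s) + s / 2 - |Real.log (p x) + H| := by
          field_simp; ring
        linarith
      have hab' := le_abs_self (Real.log (p x) + H)
      have hab0 := abs_nonneg (Real.log (p x) + H)
      rcases le_total (p x * m) 1 with hle | hle
      · have : Real.log (p x * m + 2) ≤ Real.log 3 := Real.log_le_log hN (by linarith)
        linarith
      · have h3 : Real.log (p x * m + 2) ≤ Real.log (3 * (p x * m)) :=
          Real.log_le_log hN (by linarith)
        rw [Real.log_mul (by norm_num) (by positivity), Real.log_mul h0.ne' hm0.ne'] at h3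
        linarith
    have := mul_le_mul_of_nonneg_left hg h0.le
    calc _ ≤ -(p x * Real.log (p x)) + p x * (Real.log 3 + M +
          (Real.log (p x) + H) ^ 2 / (2 * s) + s / 2) := by linarith
      _ = _ := by ring
  have h2 : ent w ≤ H + (Real.log 3 + M) + vare p / (2 * s) + s / 2 := by
    rw [ent_prod]
    refine (sum_le_sum (fun x _ => h1 x)).trans (le_of_eq ?_)
    rw [sum_add_distrib, sum_add_distrib, sum_add_distrib, ← sum_mul, ← sum_mul, hp.2,
      sum_neg_distrib, ← sum_div]
    simp only [vare, hH, ent]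
    ring
  have h3 : 2 * M = |L - H| + (L - H) := by
    rw [hM]
    rcases le_total (L - H) 0 with h | h
    · rw [max_eq_right h, abs_of_nonpos h]; ring
    · rw [max_eq_left h, abs_of_nonneg h]; ring
  have h4 : vare p / (2 * s) * 2 = vare p / s := by field_simp
  linarith

lemma kdist_glue {S T : Type*} [Fintype S] [Fintype T] (p : S → ℝ) (q : T → ℝ) (m : ℕ)
    (hm : 0 < m) (w₁ : S × Fin m → ℝ) (w₂ : T × Fin m → ℝ)
    (h₁ : IsCoupling w₁ p (fun _ : Fin m => (1 : ℝ) / m))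
    (h₂ : IsCoupling w₂ q (fun _ : Fin m => (1 : ℝ) / m)) :
    kdist p q ≤ (2 * ent w₁ - ent p - Real.log m) + (2 * ent w₂ - ent q - Real.log m) := by
  have hm0 : (0 : ℝ) < m := by exact_mod_cast hm
  obtain ⟨⟨a0, a1⟩, a2, a3⟩ := h₁
  obtain ⟨⟨b0, b1⟩, b2, b3⟩ := h₂
  let V : (S × T) × Fin m → ℝ := fun z => m * w₁ (z.1.1, z.2) * w₂ (z.1.2, z.2)
  have hV0 : ∀ z, 0 ≤ V z := fun z => mul_nonneg (mul_nonneg hm0.le (a0 _)) (b0 _)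
  let v : S × T → ℝ := fun z => ∑ u, V (z, u)
  have hv1 : ∀ x, ∑ y, v (x, y) = p x := by
    intro x
    simp only [v, V]
    rw [sum_comm, ← a2]
    refine sum_congr rfl (fun u _ => ?_)
    rw [← mul_sum, b3]
    field_simp
  have hv2 : ∀ y, ∑ x, v (x, y) = q y := by
    intro y
    simp only [v, V]
    rw [sum_comm, ← b2]
    refine sum_congr rfl (fun u _ => ?_)
    rw [← sum_mul, ← mul_sum, a3]
    field_simp
  have hp1 : ∑ x, p x = 1 := by
    rw [← a1, Fintype.sum_prod_type]
    simp only [a2]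
  have hv : IsCoupling v p q := by
    refine ⟨⟨fun z => sum_nonneg (fun u _ => hV0 _), ?_⟩, hv1, hv2⟩
    rw [Fintype.sum_prod_type]
    simp only [hv1, hp1]
  have e1 : ent v ≤ ent V := ent_ge_left V hV0 v (fun _ => rfl)
  have e2 : ent V = ent w₁ + ent w₂ - Real.log m := by
    have key : ∀ x y u, V ((x, y), u) * Real.log (V ((x, y), u)) =
        (m * Real.log m * w₁ (x, u)) * w₂ (y, u) +
        (m * (w₁ (x, u) * Real.log (w₁ (x, u)))) * w₂ (y, u) +
        (m * w₁ (x, u)) * (w₂ (y, u) * Real.log (w₂ (y, u))) := by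
      intro x y u
      simp only [V]
      by_cases c1 : w₁ (x, u) = 0
      · simp [c1]
      by_cases c2 : w₂ (y, u) = 0
      · simp [c2]
      rw [Real.log_mul (by positivity) c2, Real.log_mul hm0.ne' c1]
      ring
    have hw1 : ent w₁ = - ∑ u, ∑ x, w₁ (x, u) * Real.log (w₁ (x, u)) := by
      unfold ent; rw [Fintype.sum_prod_type_right]
    have hw2 : ent w₂ = - ∑ u, ∑ x, w₂ (x, u) * Real.log (w₂ (x, u)) := by
      unfold ent; rw [Fintype.sum_prod_type_right]
    have hVV : ent V = - ∑ u, ∑ x, ∑ y, V ((x, y), u) * Real.log (V ((x, y), u)) := by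
      unfold ent; rw [Fintype.sum_prod_type_right]
      simp only [Fintype.sum_prod_type]
    rw [hVV, hw1, hw2]
    have inner : ∀ u, ∑ x, ∑ y, V ((x, y), u) * Real.log (V ((x, y), u)) =
        Real.log m / m + ∑ x, w₁ (x, u) * Real.log (w₁ (x, u)) +
          ∑ x, w₂ (x, u) * Real.log (w₂ (x, u)) := by
      intro u
      simp only [key, sum_add_distrib, ← mul_sum, ← sum_mul, a3, b3]
      field_simp
    simp only [inner, sum_add_distrib]
    simp
    field_simp
    ring
  have := kdist_le p q v hv
  linarith

lemma pow_sums {S : Type*} [Fintype S] (p : S → ℝ) (hp : IsDist p) (g : S → ℝ) (n : ℕ) :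
    ∑ f : Fin n → S, powDist p n f = 1 ∧
    ∑ f : Fin n → S, powDist p n f * ∑ i, g (f i) = n * ∑ x, p x * g x := by
  induction n with
  | zero => simp [powDist]
  | succ n ih =>
    obtain ⟨h1, h2⟩ := ih
    have hr : ∀ G : (Fin (n + 1) → S) → ℝ, ∑ f, G f = ∑ x, ∑ f : Fin n → S, G (Fin.cons x f) := by
      intro G
      rw [← Fintype.sum_prod_type' (fun x (f : Fin n → S) => G (Fin.cons x f))]
      exact (Equiv.sum_comp (Fin.consEquiv (fun _ => S)) G).symm
    have hpc : ∀ x (f : Fin n → S), powDist p (n + 1) (Fin.cons x f) = p x * powDist p n f := by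
      intro x f
      simp [powDist, Fin.prod_univ_succ]
    constructor
    · rw [hr]
      simp only [hpc, ← mul_sum, h1, mul_one, hp.2]
    · rw [hr]
      simp only [hpc, Fin.sum_univ_succ, Fin.cons_zero, Fin.cons_succ]
      have : ∀ x, ∑ f : Fin n → S, p x * powDist p n f * (g x + ∑ i, g (f i)) =
          p x * g x + p x * (n * ∑ x, p x * g x) := by
        intro x
        rw [← h2, mul_sum, ← mul_one (p x * g x), ← h1, mul_sum, ← sum_add_distrib]
        exact sum_congr rfl (fun f _ => by ring)
      simp only [this, sum_add_distrib, ← sum_mul, hp.2]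
      push_cast
      ring

lemma pow_sq {S : Type*} [Fintype S] (p : S → ℝ) (hp : IsDist p) (g : S → ℝ)
    (hg : ∑ x, p x * g x = 0) (n : ℕ) :
    ∑ f : Fin n → S, powDist p n f * (∑ i, g (f i)) ^ 2 = n * ∑ x, p x * g x ^ 2 := by
  induction n with
  | zero => simp [powDist]
  | succ n ih =>
    obtain ⟨h1, h2⟩ := pow_sums p hp g n
    rw [hg, mul_zero] at h2
    have hr : ∀ G : (Fin (n + 1) → S) → ℝ, ∑ f, G f = ∑ x, ∑ f : Fin n → S, G (Fin.cons x f) := by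
      intro G
      rw [← Fintype.sum_prod_type' (fun x (f : Fin n → S) => G (Fin.cons x f))]
      exact (Equiv.sum_comp (Fin.consEquiv (fun _ => S)) G).symm
    have hpc : ∀ x (f : Fin n → S), powDist p (n + 1) (Fin.cons x f) = p x * powDist p n f := by
      intro x f
      simp [powDist, Fin.prod_univ_succ]
    rw [hr]
    simp only [hpc, Fin.sum_univ_succ, Fin.cons_zero, Fin.cons_succ]
    have : ∀ x, ∑ f : Fin n → S, p x * powDist p n f * (g x + ∑ i, g (f i)) ^ 2 =
        p x * g x ^ 2 + p x * (n * ∑ x, p x * g x ^ 2) := by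
      intro x
      have e : ∑ f : Fin n → S, p x * powDist p n f * (g x + ∑ i, g (f i)) ^ 2 =
        p x * g x ^ 2 * ∑ f, powDist p n f +
        2 * p x * g x * (∑ f, powDist p n f * ∑ i, g (f i)) +
        p x * ∑ f, powDist p n f * (∑ i, g (f i)) ^ 2 := by
        rw [mul_sum, mul_sum, mul_sum, ← sum_add_distrib, ← sum_add_distrib]
        exact sum_congr rfl (fun f _ => by ring)
      rw [e, h1, h2, ih]
      ring
    simp only [this, sum_add_distrib, ← sum_mul, hp.2]
    push_cast
    ring

lemma pow_dist {S : Type*} [Fintype S] (p : S → ℝ) (hp : IsDist p) (n : ℕ) :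
    IsDist (powDist p n) :=
  ⟨fun f => prod_nonneg (fun i _ => hp.1 _), (pow_sums p hp p n).1⟩

lemma pow_log {S : Type*} [Fintype S] (p : S → ℝ) (n : ℕ) (f : Fin n → S)
    (h : powDist p n f ≠ 0) : Real.log (powDist p n f) = ∑ i, Real.log (p (f i)) := by
  unfold powDist at *
  exact Real.log_prod (fun i _ => prod_ne_zero_iff.mp h i (mem_univ i))

lemma ent_pow {S : Type*} [Fintype S] (p : S → ℝ) (hp : IsDist p) (n : ℕ) :
    ent (powDist p n) = n * ent p := by
  have h := (pow_sums p hp (fun x => Real.log (p x)) n).2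
  unfold ent
  rw [mul_neg, ← h]
  congr 1
  refine sum_congr rfl (fun f _ => ?_)
  by_cases c : powDist p n f = 0
  · simp [c]
  · rw [pow_log p n f c]

lemma vare_pow {S : Type*} [Fintype S] (p : S → ℝ) (hp : IsDist p) (n : ℕ) :
    vare (powDist p n) = n * vare p := by
  have h := pow_sq p hp (fun x => Real.log (p x) + ent p) (by
    simp only [mul_add, sum_add_distrib, ← sum_mul, hp.2]
    simp [ent]) n
  unfold vare
  rw [← h, ent_pow p hp]
  refine sum_congr rfl (fun f _ => ?_)
  by_cases c : powDist p n f = 0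
  · simp [c]
  · rw [pow_log p n f c, sum_add_distrib]
    simp

lemma vare_nonneg {S : Type*} [Fintype S] (p : S → ℝ) (hp : IsDist p) : 0 ≤ vare p :=
  sum_nonneg (fun x _ => mul_nonneg (hp.1 x) (sq_nonneg _))

lemma exists_good_pow {S : Type*} [Fintype S] (p : S → ℝ) (hp : IsDist p) (m : ℕ) (hm : 0 < m)
    (n : ℕ) (hn : 0 < n) :
    ∃ w : (Fin n → S) × Fin m → ℝ, IsCoupling w (powDist p n) (fun _ : Fin m => (1 : ℝ) / m) ∧
      2 * ent w - ent (powDist p n) - Real.log m ≤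
        |Real.log m - n * ent p| + 2 * Real.log 3 + (vare p + 1) * Real.sqrt n := by
  have hn0 : (0 : ℝ) < n := by exact_mod_cast hn
  obtain ⟨w, h1, h2⟩ := exists_good (powDist p n) (pow_dist p hp n) m hm (Real.sqrt n)
    (Real.sqrt_pos.mpr hn0)
  refine ⟨w, h1, h2.trans (le_of_eq ?_)⟩
  rw [vare_pow p hp, ent_pow p hp, mul_div_right_comm, Real.div_sqrt]
  ring

lemma ceil_exp_log (t : ℝ) (ht : 0 ≤ t) :
    |Real.log (⌈Real.exp t⌉₊ : ℝ) - t| ≤ Real.log 2 := by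
  have h1 : Real.exp t ≤ ⌈Real.exp t⌉₊ := Nat.le_ceil _
  have h2 : (⌈Real.exp t⌉₊ : ℝ) < Real.exp t + 1 := Nat.ceil_lt_add_one (Real.exp_pos t).le
  have h3 : 1 ≤ Real.exp t := Real.one_le_exp ht
  have h4 := Real.exp_pos t
  have a := Real.log_le_log h4 h1
  have b := Real.log_le_log (h4.trans_le h1) (show (⌈Real.exp t⌉₊ : ℝ) ≤ 2 * Real.exp t by linarith)
  rw [Real.log_mul (by norm_num) h4.ne'] at b
  rw [Real.log_exp] at a b
  rw [abs_of_nonneg (by linarith)]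
  linarith

lemma ent_nonneg {S : Type*} [Fintype S] (p : S → ℝ) (hp : IsDist p) : 0 ≤ ent p := by
  unfold ent
  rw [← sum_neg_distrib]
  apply sum_nonneg
  intro x _
  have : p x ≤ 1 := hp.2 ▸ single_le_sum (fun y _ => hp.1 y) (mem_univ x)
  have := Real.log_nonpos (hp.1 x) this
  have := mul_nonpos_of_nonneg_of_nonpos (hp.1 x) this
  linarith

lemma inv_sqrt_tendsto (A B : ℝ) :
    Filter.Tendsto (fun n : ℕ => A * (1 / (n : ℝ)) + B * (Real.sqrt n)⁻¹) Filter.atTop (nhds 0) := by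
  have h1 := (tendsto_one_div_atTop_nhds_zero_nat (𝕜 := ℝ)).const_mul A
  have h2 := ((tendsto_inv_atTop_zero.comp
    (Real.tendsto_sqrt_atTop.comp (tendsto_natCast_atTop_atTop (R := ℝ)))).const_mul B)
  simpa using h1.add h2

end AEP

theorem stmt19 {S : Type*} [Fintype S] (p : S → ℝ) (hp : IsDist p) :
    (∃ m : ℕ → ℕ, (∀ n, 0 < m n) ∧
      ∃ C : ℝ, ∃ N : ℕ, ∀ n : ℕ, N ≤ n →
        kdist (powDist p n) (fun _ : Fin (m n) => (1 : ℝ) / (m n)) / n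
          ≤ C * Real.sqrt ((Real.log n) ^ 3 / n)) ∧
    ∀ (T : Type) [Fintype T] (q : T → ℝ), IsDist q →
      Filter.Tendsto (fun n : ℕ => kdist (powDist p n) (powDist q n) / n)
        Filter.atTop (nhds |ent p - ent q|) := by
  have hm : ∀ n : ℕ, 0 < ⌈Real.exp (n * ent p)⌉₊ := fun n => Nat.ceil_pos.mpr (Real.exp_pos _)
  have hlm : ∀ n : ℕ, |Real.log (⌈Real.exp (n * ent p)⌉₊ : ℝ) - n * ent p| ≤ Real.log 2 :=
    fun n => AEP.ceil_exp_log _ (mul_nonneg (Nat.cast_nonneg n) (AEP.ent_nonneg p hp))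
  have hl2 : 0 ≤ Real.log 2 := Real.log_nonneg (by norm_num)
  have hl3 : 0 ≤ Real.log 3 := Real.log_nonneg (by norm_num)
  refine ⟨⟨fun n => ⌈Real.exp (n * ent p)⌉₊, hm,
    Real.log 2 + 2 * Real.log 3 + (AEP.vare p + 1), 3, ?_⟩, ?_⟩
  · intro n hn
    have hn3 : (3 : ℝ) ≤ n := by exact_mod_cast hn
    have hn0 : (0 : ℝ) < n := by linarith
    obtain ⟨w, h1, h2⟩ := AEP.exists_good_pow p hp _ (hm n) n (by omega)
    have h3 := AEP.kdist_le _ _ w h1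
    rw [AEP.ent_unif _ (hm n)] at h3
    have hs : 1 ≤ Real.sqrt n := Real.one_le_sqrt.mpr (by linarith)
    have hv := AEP.vare_nonneg p hp
    have h4 : kdist (powDist p n) (fun _ : Fin ⌈Real.exp (n * ent p)⌉₊ =>
        (1 : ℝ) / (⌈Real.exp (n * ent p)⌉₊ : ℝ)) ≤
        (Real.log 2 + 2 * Real.log 3 + (AEP.vare p + 1)) * Real.sqrt n := by
      have := hlm n
      nlinarith [mul_le_mul_of_nonneg_left hs (by linarith : 0 ≤ Real.log 2 + 2 * Real.log 3)]
    have hlog : 1 ≤ Real.log n := by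
      rw [Real.le_log_iff_exp_le hn0]
      linarith [Real.exp_one_lt_d9]
    have hlog3 : 1 ≤ Real.log n ^ 3 := one_le_pow₀ hlog
    have h5 : Real.sqrt n / n ≤ Real.sqrt ((Real.log n) ^ 3 / n) := by
      rw [Real.sqrt_div_self', one_div, ← Real.sqrt_inv, ← one_div]
      apply Real.sqrt_le_sqrt
      gcongr
    calc _ ≤ (Real.log 2 + 2 * Real.log 3 + (AEP.vare p + 1)) * Real.sqrt n / n := by
          gcongr
      _ = (Real.log 2 + 2 * Real.log 3 + (AEP.vare p + 1)) * (Real.sqrt n / n) := by ring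
      _ ≤ _ := by
          apply mul_le_mul_of_nonneg_left h5
          linarith
  · intro T _ q hq
    set A := 2 * Real.log 2 + 4 * Real.log 3 with hA
    set B := AEP.vare p + AEP.vare q + 2 with hB
    have lim := (AEP.inv_sqrt_tendsto A B).const_add |ent p - ent q|
    rw [add_zero] at lim
    refine tendsto_of_tendsto_of_tendsto_of_le_of_le' tendsto_const_nhds lim ?_ ?_
    · filter_upwards [Filter.eventually_gt_atTop 0] with n hn
      have hn0 : (0 : ℝ) < n := by exact_mod_cast hn
      have h := AEP.le_kdist _ _ (AEP.pow_dist p hp n) (AEP.pow_dist q hq n)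
      rw [AEP.ent_pow p hp, AEP.ent_pow q hq, ← mul_sub, abs_mul, abs_of_pos hn0] at h
      rw [le_div_iff₀ hn0]
      linarith
    · filter_upwards [Filter.eventually_gt_atTop 0] with n hn
      have hn0 : (0 : ℝ) < n := by exact_mod_cast hn
      obtain ⟨w₁, h1, h2⟩ := AEP.exists_good_pow p hp _ (hm n) n hn
      obtain ⟨w₂, h3, h4⟩ := AEP.exists_good_pow q hq _ (hm n) n hn
      have h5 := AEP.kdist_glue _ _ _ (hm n) w₁ w₂ h1 h3
      have h6 : |Real.log (⌈Real.exp (n * ent p)⌉₊ : ℝ) - n * ent q| ≤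
          Real.log 2 + n * |ent p - ent q| := by
        have e : (n : ℝ) * |ent p - ent q| = |n * ent p - n * ent q| := by
          rw [← mul_sub, abs_mul, abs_of_pos hn0]
        rw [e]
        refine (abs_sub_le _ (n * ent p) _).trans ?_
        linarith [hlm n]
      have h7 : kdist (powDist p n) (powDist q n) ≤
          n * |ent p - ent q| + A + B * Real.sqrt n := by
        have := hlm n
        rw [hA, hB]
        linarith
      calc _ ≤ (n * |ent p - ent q| + A + B * Real.sqrt n) / n := by gcongr
        _ = |ent p - ent q| + (A * (1 / n) + B * (Real.sqrt n / n)) := by field_simp; ring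
        _ = _ := by rw [Real.sqrt_div_self', one_div (Real.sqrt n)]
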